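/- arXiv:1509.06722 — 4 statements merged into one kernel-verified Lean document; each statement's English description precedes it below -/
import Mathlib

section
/- Let (α, μ) be a measure space, let m ≥ 1 be a natural number, and set p = 2m. Then the function N₀ : Lp(μ; ℝ) → ℝ defined by N₀(f) = ∫ (f(x))^{2m} dμ(x) (which equals ∫ |f(x)|^p dμ(x), since the exponent is even) is infinitely Fréchet differentiable, i.e. of class C^∞ as a map between the Banach space Lp(μ; ℝ) and ℝ. -/
open MeasureTheory ENNReal

/-! The `n`-th power map `Lᵖ → L^(p/n)` is built from the bounded Hölder multiplications
`Lᵖ × L^(p/k) → L^(p/(k+1))` by the recursion `f ^ (k + 1) = f * f ^ k`, so it is smooth. For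
`p = n` it lands in `L¹`, and the functional is its composition with the continuous linear map
`f ↦ ∫ f` on `L¹`. -/

section ExponentDivision

variable {p : ℝ≥0∞}

instance holderTriple_div_natCast_succ (n : ℕ) : HolderTriple p (p / n) (p / (n + 1 : ℕ)) where
  inv_add_inv_eq_inv := by
    rcases eq_or_ne p 0 with rfl | hp
    · simp
    · have inv_div_natCast (k : ℕ) : (p / k)⁻¹ = k * p⁻¹ := by
        rw [ENNReal.inv_div (.inl (natCast_ne_top k)) (.inr hp), div_eq_mul_inv]
      rw [inv_div_natCast, inv_div_natCast]
      push_cast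
      ring

theorem one_le_div_natCast_of_succ {n : ℕ} (h : 1 ≤ p / (n + 1 : ℕ)) : 1 ≤ p / n :=
  h.trans (ENNReal.div_le_div_left (Nat.cast_le.2 n.le_succ) p)

end ExponentDivision

section PowerMap

variable {α A : Type*} [MeasurableSpace α] {μ : Measure α} [NormedRing A] {p r : ℝ≥0∞} {n : ℕ}

theorem memLp_pow {f : α → A} (hf : MemLp f p μ) (n : ℕ) :
    MemLp (fun x => f x ^ n) (p / n) μ := by
  induction n with
  | zero =>
    rcases eq_or_ne p 0 with rfl | hp
    · simpa using aestronglyMeasurable_const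
    · simpa [ENNReal.div_zero hp] using memLp_top_const (1 : A)
  | succ n ih =>
    simp only [pow_succ']
    exact ih.mul' hf

/-- The Nemytskii operator `f ↦ f ^ n` from `Lᵖ` to `Lʳ`, where `r = p / n`. The exponent `r` is
a separate variable so that the target can be `L¹` on the nose when `p = n`. -/
noncomputable def lpPow (n : ℕ) (hr : p / n = r) (f : Lp A p μ) : Lp A r μ :=
  (hr ▸ memLp_pow (Lp.memLp f) n : MemLp (fun x => f x ^ n) r μ).toLp

theorem coeFn_lpPow (hr : p / n = r) (f : Lp A p μ) : lpPow n hr f =ᵐ[μ] fun x => f x ^ n :=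
  MemLp.coeFn_toLp _

theorem lpPow_zero (hr : p / (0 : ℕ) = r) (f g : Lp A p μ) : lpPow 0 hr f = lpPow 0 hr g := by
  simp only [lpPow, pow_zero]

variable (𝕜 : Type*) [NontriviallyNormedField 𝕜] [NormedAlgebra 𝕜 A]

theorem lpPow_succ (f : Lp A p μ) :
    lpPow (n + 1) rfl f = (ContinuousLinearMap.mul 𝕜 A).holder _ f (lpPow n rfl f) := by
  apply Lp.ext
  filter_upwards [coeFn_lpPow (n := n + 1) rfl f, coeFn_lpPow (n := n) rfl f,
    (ContinuousLinearMap.mul 𝕜 A).coeFn_holder (r := p / (n + 1 : ℕ)) f (lpPow n rfl f)]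
    with x h_succ h_pow h_mul
  rw [h_succ, h_mul, h_pow, pow_succ', ContinuousLinearMap.mul_apply']

theorem contDiff_lpPow [Fact (1 ≤ p)] [hr₁ : Fact (1 ≤ r)] (hr : p / n = r) {k : WithTop ℕ∞} :
    ContDiff 𝕜 k (lpPow n hr : Lp A p μ → Lp A r μ) := by
  induction n generalizing r with
  | zero =>
    rw [funext fun f => lpPow_zero hr f 0]
    exact contDiff_const
  | succ n ih =>
    subst hr
    have : Fact (1 ≤ p / n) := ⟨one_le_div_natCast_of_succ hr₁.out⟩
    rw [funext (lpPow_succ 𝕜)]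
    exact ((ContinuousLinearMap.mul 𝕜 A).holderL μ p (p / n)
      (p / (n + 1 : ℕ))).contDiff.clm_apply (ih rfl)

end PowerMap

theorem contDiff_integral_L1 {α E : Type*} (𝕜 : Type*) [MeasurableSpace α] {μ : Measure α}
    [NormedAddCommGroup E] [NormedSpace ℝ E] [CompleteSpace E] [NontriviallyNormedField 𝕜]
    [NormedSpace 𝕜 E] [SMulCommClass ℝ 𝕜 E] {k : WithTop ℕ∞} :
    ContDiff 𝕜 k fun f : α →₁[μ] E => ∫ x, f x ∂μ := by
  simp only [← L1.integral_eq_integral, L1.integral_eq' 𝕜]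
  exact (L1.integralCLM' 𝕜 (μ := μ) (E := E)).contDiff

theorem stmt_1_general {α 𝕜 A : Type*} [MeasurableSpace α] (μ : Measure α)
    [NontriviallyNormedField 𝕜] [NormedRing A] [NormedAlgebra 𝕜 A] [NormedSpace ℝ A]
    [SMulCommClass ℝ 𝕜 A] [CompleteSpace A] {p : ℝ≥0∞} [hp₁ : Fact (1 ≤ p)] {n : ℕ} (hp : p = n)
    {k : WithTop ℕ∞} : ContDiff 𝕜 k fun f : Lp A p μ => ∫ x, f x ^ n ∂μ := by
  have hr : p / n = 1 := by
    rw [← hp]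
    exact ENNReal.div_self (zero_lt_one.trans_le hp₁.out).ne' (hp ▸ natCast_ne_top n)
  have integral_lpPow (f : Lp A p μ) : ∫ x, lpPow n hr f x ∂μ = ∫ x, f x ^ n ∂μ :=
    integral_congr_ae (coeFn_lpPow hr f)
  simp only [← integral_lpPow]
  exact (contDiff_integral_L1 𝕜).comp (contDiff_lpPow 𝕜 hr)

/-- For `p = 2m` a positive even integer, the functional
`N₀(f) = ∫ (f x)^(2m) dμ = ∫ |f|^p dμ` is `C^∞` on `Lᵖ(μ; ℝ)`. -/
theorem stmt_1 {α : Type*} [MeasurableSpace α] (μ : Measure α)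
    (m : ℕ) (hm : 1 ≤ m) [Fact (1 ≤ (2 * m : ℝ≥0∞))] :
    ContDiff ℝ (⊤ : ℕ∞) (fun f : Lp ℝ (2 * m : ℝ≥0∞) μ => ∫ x, (f x) ^ (2 * m) ∂μ) :=
  stmt_1_general μ (by push_cast; rfl)
end

section
/- Let (α, μ) be a measure space, let m ≥ 1 be a natural number, set p = 2m, and let N₀ : Lp(μ; ℝ) → ℝ be given by N₀(f) = ∫ (f(x))^{2m} dμ(x). Then for every f ∈ Lp(μ; ℝ): (i) for every ξ ∈ Lp(μ; ℝ) the function x ↦ (f(x))^{2m−1} · ξ(x) is μ-integrable, (ii) the assignment ξ ↦ 2m · ∫ (f(x))^{2m−1} ξ(x) dμ(x) is a continuous linear functional on Lp(μ; ℝ), and (iii) N₀ is Fréchet differentiable at f with this functional as its derivative. -/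
open MeasureTheory ENNReal

/-!
By Hölder's inequality, `(f₁, …, fₙ) ↦ ∫ f₁ ⋯ fₙ dμ` is a continuous `n`-linear map on `Lⁿ`.
The functional `f ↦ ∫ fⁿ dμ` is its restriction to the diagonal, so its derivative at `f` in the
direction `ξ` is the sum over the `n` slots of the value at `(f, …, ξ, …, f)`; by commutativity
each of these values is `∫ f ^ (n - 1) * ξ dμ`.
-/

section ProductsInLp

variable {ι α 𝕜 A : Type*} [MeasurableSpace α] {μ : Measure α} [NormedCommRing A]

theorem eLpNorm_prod_le {s : Finset ι} (hs : s.Nonempty) {f : ι → α → A} {p : ι → ℝ≥0∞}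
    (hf : ∀ i ∈ s, AEStronglyMeasurable (f i) μ) :
    eLpNorm (∏ i ∈ s, f i) (∑ i ∈ s, (p i)⁻¹)⁻¹ μ ≤ ∏ i ∈ s, eLpNorm (f i) (p i) μ := by
  induction hs using Finset.Nonempty.cons_induction with
  | singleton i => simp
  | cons i s hi _ ih =>
    obtain ⟨hfi, hfs⟩ := Finset.forall_mem_cons hi _ |>.mp hf
    have : HolderTriple (p i) (∑ j ∈ s, (p j)⁻¹)⁻¹ (∑ j ∈ s.cons i hi, (p j)⁻¹)⁻¹ :=
      ⟨by simp only [Finset.sum_cons, inv_inv]⟩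
    rw [Finset.prod_cons, Finset.prod_cons]
    calc eLpNorm (f i * ∏ j ∈ s, f j) (∑ j ∈ s.cons i hi, (p j)⁻¹)⁻¹ μ
        ≤ eLpNorm (f i) (p i) μ * eLpNorm (∏ j ∈ s, f j) (∑ j ∈ s, (p j)⁻¹)⁻¹ μ := by
          simpa only [NNReal.coe_one, ENNReal.coe_one, one_mul] using!
            eLpNorm_le_eLpNorm_mul_eLpNorm_of_nnnorm hfi (s.aestronglyMeasurable_prod hfs) (· * ·) 1
              (.of_forall fun x => by simpa only [one_mul] using nnnorm_mul_le _ _)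
      _ ≤ eLpNorm (f i) (p i) μ * ∏ j ∈ s, eLpNorm (f j) (p j) μ := by
          gcongr
          exact ih hfs

variable [Fintype ι] {p : ι → ℝ≥0∞} {r : ℝ≥0∞}

theorem prod_update_coeFn_Lp [DecidableEq ι] (g : ∀ i, Lp A (p i) μ) (i : ι) (h : Lp A (p i) μ)
    (x : α) :
    ∏ j, Function.update g i h j x = h x * ∏ j ∈ Finset.univ \ {i}, g j x := by
  simp only [Function.apply_update fun j (u : Lp A (p j) μ) => u x]
  exact Finset.prod_update_of_mem (Finset.mem_univ i) _ _

theorem prod_update_const_coeFn_Lp [DecidableEq ι] {q : ℝ≥0∞} (f h : Lp A q μ) (i : ι) (x : α) :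
    ∏ j, Function.update (fun _ => f) i h j x = f x ^ (Fintype.card ι - 1) * h x := by
  rw [prod_update_coeFn_Lp, Finset.prod_const, Finset.sdiff_singleton_eq_erase,
    Finset.card_erase_of_mem (Finset.mem_univ i), Finset.card_univ, mul_comm]

theorem memLp_prod_coeFn_Lp (hpr : ∑ i, (p i)⁻¹ = r⁻¹) (g : ∀ i, Lp A (p i) μ) :
    MemLp (fun x => ∏ i, g i x) r μ := by
  simpa only [hpr, inv_inv] using MemLp.prod' fun i (_ : i ∈ Finset.univ) => Lp.memLp (g i)

theorem integrable_prod_coeFn_Lp (hp : ∑ i, (p i)⁻¹ = 1) (g : ∀ i, Lp A (p i) μ) :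
    Integrable (fun x => ∏ i, g i x) μ :=
  memLp_one_iff_integrable.mp (memLp_prod_coeFn_Lp (hp.trans inv_one.symm) g)

/-- The pointwise product of a finite family `g i ∈ L^{p i}`, as an element of `L^r` for
`∑ i, 1 / p i = 1 / r`. -/
noncomputable def lpProd (hpr : ∑ i, (p i)⁻¹ = r⁻¹) (g : ∀ i, Lp A (p i) μ) : Lp A r μ :=
  (memLp_prod_coeFn_Lp hpr g).toLp _

theorem coeFn_lpProd (hpr : ∑ i, (p i)⁻¹ = r⁻¹) (g : ∀ i, Lp A (p i) μ) :
    lpProd hpr g =ᵐ[μ] fun x => ∏ i, g i x :=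
  MemLp.coeFn_toLp _

theorem norm_lpProd_le [Nonempty ι] (hpr : ∑ i, (p i)⁻¹ = r⁻¹) (g : ∀ i, Lp A (p i) μ) :
    ‖lpProd hpr g‖ ≤ ∏ i, ‖g i‖ := by
  rw [lpProd, Lp.norm_toLp]
  simp only [Lp.norm_def, ← ENNReal.toReal_prod]
  refine ENNReal.toReal_mono (ENNReal.prod_ne_top fun i _ => Lp.eLpNorm_ne_top (g i)) ?_
  simpa only [hpr, inv_inv, Finset.prod_fn] using
    eLpNorm_prod_le (p := p) Finset.univ_nonempty fun i _ => Lp.aestronglyMeasurable (g i)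

theorem lpProd_update_add [DecidableEq ι] (hpr : ∑ i, (p i)⁻¹ = r⁻¹) (g : ∀ i, Lp A (p i) μ)
    (i : ι) (h k : Lp A (p i) μ) :
    lpProd hpr (Function.update g i (h + k)) =
      lpProd hpr (Function.update g i h) + lpProd hpr (Function.update g i k) := by
  refine Lp.ext ?_
  filter_upwards [coeFn_lpProd hpr (Function.update g i (h + k)),
    coeFn_lpProd hpr (Function.update g i h), coeFn_lpProd hpr (Function.update g i k),
    Lp.coeFn_add (lpProd hpr (Function.update g i h)) (lpProd hpr (Function.update g i k)),
    Lp.coeFn_add h k] with x hprod_add hprod_h hprod_k hadd_prod hadd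
  simp only [hprod_add, hprod_h, hprod_k, hadd_prod, hadd, prod_update_coeFn_Lp, Pi.add_apply,
    add_mul]

theorem lpProd_update_smul [DecidableEq ι] [NormedField 𝕜] [NormedAlgebra 𝕜 A]
    (hpr : ∑ i, (p i)⁻¹ = r⁻¹) (g : ∀ i, Lp A (p i) μ) (i : ι) (c : 𝕜) (h : Lp A (p i) μ) :
    lpProd hpr (Function.update g i (c • h)) = c • lpProd hpr (Function.update g i h) := by
  refine Lp.ext ?_
  filter_upwards [coeFn_lpProd hpr (Function.update g i (c • h)),
    coeFn_lpProd hpr (Function.update g i h),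
    Lp.coeFn_smul c (lpProd hpr (Function.update g i h)),
    Lp.coeFn_smul c h] with x hprod_smul hprod_h hsmul_prod hsmul
  simp only [hprod_smul, hprod_h, hsmul_prod, hsmul, prod_update_coeFn_Lp, Pi.smul_apply,
    smul_mul_assoc]

variable [NontriviallyNormedField 𝕜] [NormedAlgebra 𝕜 A] [Nonempty ι] [∀ i, Fact (1 ≤ p i)]

variable (𝕜) in
/-- The product `lpProd` as a continuous multilinear map. -/
noncomputable def lpProdL [Fact (1 ≤ r)] (hpr : ∑ i, (p i)⁻¹ = r⁻¹) :
    ContinuousMultilinearMap 𝕜 (fun i => Lp A (p i) μ) (Lp A r μ) :=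
  MultilinearMap.mkContinuous
    { toFun := lpProd hpr
      map_update_add' := lpProd_update_add hpr
      map_update_smul' := lpProd_update_smul hpr }
    1 fun g => (norm_lpProd_le hpr g).trans_eq (one_mul _).symm

variable [NormedSpace ℝ A] [SMulCommClass ℝ 𝕜 A] [CompleteSpace A]

variable (𝕜) in
/-- The multilinear map `g ↦ ∫ x, ∏ i, g i x ∂μ` on `L^{p i}` for `∑ i, 1 / p i = 1`. -/
noncomputable def integralProdL (hp : ∑ i, (p i)⁻¹ = 1) :
    ContinuousMultilinearMap 𝕜 (fun i => Lp A (p i) μ) A :=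
  (L1.integralCLM' 𝕜).compContinuousMultilinearMap (lpProdL 𝕜 (hp.trans inv_one.symm))

theorem integralProdL_apply (hp : ∑ i, (p i)⁻¹ = 1) (g : ∀ i, Lp A (p i) μ) :
    integralProdL 𝕜 hp g = ∫ x, ∏ i, g i x ∂μ :=
  calc integralProdL 𝕜 hp g = ∫ x, lpProd (hp.trans inv_one.symm) g x ∂μ := by
        rw [← L1.integral_eq_integral, L1.integral_eq' 𝕜]
        rfl
    _ = ∫ x, ∏ i, g i x ∂μ := integral_congr_ae (coeFn_lpProd _ g)

end ProductsInLp

theorem hasFDerivAt_multilinear_diagonal {ι 𝕜 E F : Type*} [Fintype ι] [DecidableEq ι]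
    [NontriviallyNormedField 𝕜] [NormedAddCommGroup E] [NormedSpace 𝕜 E]
    [NormedAddCommGroup F] [NormedSpace 𝕜 F]
    (P : ContinuousMultilinearMap 𝕜 (fun _ : ι => E) F) (x : E) :
    HasFDerivAt (fun y => P fun _ => y) (∑ i, P.toContinuousLinearMap (fun _ => x) i) x := by
  simpa only [ContinuousLinearMap.comp_id, id] using
    HasFDerivAt.multilinear_comp P fun _ => hasFDerivAt_id (𝕜 := 𝕜) x

theorem stmt_4_general {α 𝕜 A : Type*} [MeasurableSpace α] (μ : Measure α)
    [NontriviallyNormedField 𝕜] [NormedCommRing A] [NormedAlgebra 𝕜 A]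
    [NormedSpace ℝ A] [SMulCommClass ℝ 𝕜 A] [CompleteSpace A]
    (n : ℕ) {p : ℝ≥0∞} (hp : p = n) [Fact (1 ≤ p)] (f : Lp A p μ) :
    (∀ ξ : Lp A p μ, Integrable (fun x => f x ^ (n - 1) * ξ x) μ) ∧
    ∃ L : Lp A p μ →L[𝕜] A,
      (∀ ξ : Lp A p μ, L ξ = n * ∫ x, f x ^ (n - 1) * ξ x ∂μ) ∧
      HasFDerivAt (fun g : Lp A p μ => ∫ x, g x ^ n ∂μ) L f := by
  have hn : n ≠ 0 := by
    rintro rfl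
    exact absurd (Fact.out : 1 ≤ p) (by simp [hp])
  have : NeZero n := ⟨hn⟩
  have hsum : ∑ _i : Fin n, p⁻¹ = 1 := by
    simp [hp, ENNReal.mul_inv_cancel, hn]
  let P := integralProdL (μ := μ) (A := A) 𝕜 hsum
  refine ⟨fun ξ => ?_, ∑ i, P.toContinuousLinearMap (fun _ => f) i, fun ξ => ?_, ?_⟩
  · simpa only [prod_update_const_coeFn_Lp, Fintype.card_fin] using
      integrable_prod_coeFn_Lp hsum (Function.update (fun _ => f) 0 ξ)
  · simp only [P, sum_apply, ContinuousMultilinearMap.toContinuousLinearMap_apply,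
      integralProdL_apply, prod_update_const_coeFn_Lp, Fintype.card_fin, Finset.sum_const,
      Finset.card_univ, nsmul_eq_mul]
  · simpa only [P, integralProdL_apply, Finset.prod_const, Finset.card_univ, Fintype.card_fin]
      using hasFDerivAt_multilinear_diagonal P f

/-- For `p = 2m` and `N₀(f) = ∫ (f x)^(2m) dμ` on `Lᵖ(μ; ℝ)`:
(i) for every `ξ ∈ Lᵖ` the function `x ↦ (f x)^(2m-1) * ξ x` is integrable,
(ii) `ξ ↦ 2m ∫ f^(2m-1) ξ dμ` is a continuous linear functional, and
(iii) `N₀` is Fréchet differentiable at `f` with this functional as derivative. -/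
theorem stmt_4 {α : Type*} [MeasurableSpace α] (μ : Measure α)
    (m : ℕ) (hm : 1 ≤ m) [Fact (1 ≤ (2 * m : ℝ≥0∞))]
    (f : Lp ℝ (2 * m : ℝ≥0∞) μ) :
    (∀ ξ : Lp ℝ (2 * m : ℝ≥0∞) μ,
        Integrable (fun x => (f x) ^ (2 * m - 1) * ξ x) μ) ∧
    ∃ L : Lp ℝ (2 * m : ℝ≥0∞) μ →L[ℝ] ℝ,
      (∀ ξ : Lp ℝ (2 * m : ℝ≥0∞) μ,
          L ξ = (2 * m : ℝ) * ∫ x, (f x) ^ (2 * m - 1) * ξ x ∂μ) ∧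
      HasFDerivAt (fun g : Lp ℝ (2 * m : ℝ≥0∞) μ => ∫ x, (g x) ^ (2 * m) ∂μ) L f := by
  simpa only [Nat.cast_mul, Nat.cast_ofNat] using
    stmt_4_general (𝕜 := ℝ) μ (2 * m) (by push_cast; rfl) f
end

section
/- Let K be a nonempty compact topological space, let E and F be finite-dimensional real normed vector spaces, and let g : E → F be a C^∞ map. Then the composition operator g∗ : C(K, E) → C(K, F) defined by g∗(u) = g ∘ u is infinitely Fréchet differentiable (of class C^∞) between the Banach spaces C(K, E) and C(K, F) equipped with the supremum norm. -/
/-!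
At `u`, the candidate derivative of `u ↦ g ∘ u` is pointwise application of the field
`x ↦ g' (u x)`. Each `x : K` has a neighbourhood on which the first-order expansion of `g` holds
with error `ε`, uniformly over the pairs of maps close to `u`; compactness of `K` then makes the
estimate uniform, which is differentiability for the sup norm. The derivative of postcomposition by
`g` is thus postcomposition by `g'` followed by a continuous linear map, so that regularity is
gained one order at a time by induction.
-/

open scoped Topology

universe uE uF

section Differentiability

variable {K : Type*} [TopologicalSpace K] [CompactSpace K]

/-- Mathlib's `ContinuousEval` instance assumes local compactness, which can fail for a compact
space that is not Hausdorff; here uniformity of convergence in `C(K, Y)` takes its place. -/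
theorem continuous_eval_of_compactSpace {Y : Type*} [UniformSpace Y] :
    Continuous fun p : C(K, Y) × K => p.1 p.2 := by
  refine continuous_iff_continuousAt.2 fun ⟨u, x⟩ => ?_
  have uniform_limit : TendstoUniformly (fun p : C(K, Y) × K => ⇑p.1) u (𝓝 (u, x)) :=
    ContinuousMap.tendsto_iff_tendstoUniformly.1 continuous_fst.continuousAt
  exact uniform_limit.tendsto_comp u.continuous.continuousAt continuous_snd.continuousAt

variable {𝕜 : Type*} [NontriviallyNormedField 𝕜]
  {E : Type*} [NormedAddCommGroup E] [NormedSpace 𝕜 E]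
  {F : Type*} [NormedAddCommGroup F] [NormedSpace 𝕜 F]

/-- Pointwise application of a continuous field of operators to a continuous map, as a continuous
bilinear map. It expresses the derivative of postcomposition by a differentiable map. -/
noncomputable def pointwiseApply :
    C(K, E →L[𝕜] F) →L[𝕜] C(K, E) →L[𝕜] C(K, F) :=
  LinearMap.mkContinuous₂
    (LinearMap.mk₂ 𝕜
      (fun (A : C(K, E →L[𝕜] F)) (h : C(K, E)) =>
        (⟨fun x => A x (h x), A.continuous.clm_apply h.continuous⟩ : C(K, F)))
      (by intros; ext; simp) (by intros; ext; simp) (by intros; ext; simp) (by intros; ext; simp))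
    1 fun A h => by
      refine (ContinuousMap.norm_le _ (by positivity)).2 fun x => ?_
      rw [one_mul]
      exact (A x).le_of_opNorm_le_of_le (A.norm_coe_le_norm x) (h.norm_coe_le_norm x)

@[simp]
theorem pointwiseApply_apply (A : C(K, E →L[𝕜] F)) (h : C(K, E)) (x : K) :
    pointwiseApply A h x = A x (h x) :=
  rfl

theorem eventually_norm_sub_sub_apply_le_of_hasStrictFDerivAt {g : E → F} {A : E →L[𝕜] F} {e : E}
    (hg : HasStrictFDerivAt g A e) {ε : ℝ} (hε : 0 < ε) :
    ∀ᶠ q : (E × E) × (E →L[𝕜] F) in 𝓝 ((e, e), A),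
      ‖g q.1.1 - g q.1.2 - q.2 (q.1.1 - q.1.2)‖ ≤ ε * ‖q.1.1 - q.1.2‖ := by
  have expansion := hg.isLittleO.def (half_pos hε)
  have operator_close : ∀ᶠ B in 𝓝 A, ‖A - B‖ ≤ ε / 2 := by
    filter_upwards [Metric.closedBall_mem_nhds A (half_pos hε)] with B hB
    rwa [← dist_eq_norm, dist_comm]
  rw [nhds_prod_eq]
  filter_upwards [expansion.prod_mk operator_close] with ⟨⟨a, b⟩, B⟩ ⟨hab, hB⟩
  calc ‖g a - g b - B (a - b)‖
      = ‖(g a - g b - A (a - b)) + (A - B) (a - b)‖ := by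
        rw [sub_apply, sub_add_sub_cancel]
    _ ≤ ε / 2 * ‖a - b‖ + ε / 2 * ‖a - b‖ :=
        norm_add_le_of_le hab ((A - B).le_of_opNorm_le hB _)
    _ = ε * ‖a - b‖ := by ring

theorem hasStrictFDerivAt_postcomp {g : C(E, F)} {A : C(K, E →L[𝕜] F)} {u : C(K, E)}
    (hg : ∀ x, HasStrictFDerivAt g (A x) (u x)) :
    HasStrictFDerivAt (fun v : C(K, E) => g.comp v) (pointwiseApply A) u := by
  have local_bound : ∀ ε > 0, ∀ x ∈ (Set.univ : Set K),
      ∀ᶠ z : (C(K, E) × C(K, E)) × K in 𝓝 ((u, u), x),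
        ‖g (z.1.1 z.2) - g (z.1.2 z.2) - A z.2 (z.1.1 z.2 - z.1.2 z.2)‖
          ≤ ε * ‖z.1.1 z.2 - z.1.2 z.2‖ := by
    intro ε hε x _
    have values_continuous : Continuous fun z : (C(K, E) × C(K, E)) × K =>
        ((z.1.1 z.2, z.1.2 z.2), A z.2) :=
      ((continuous_eval_of_compactSpace.comp (continuous_fst.fst.prodMk continuous_snd)).prodMk
        (continuous_eval_of_compactSpace.comp (continuous_fst.snd.prodMk continuous_snd))).prodMk
        (A.continuous.comp continuous_snd)
    exact (values_continuous.tendsto ((u, u), x)).eventually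
      (eventually_norm_sub_sub_apply_le_of_hasStrictFDerivAt (hg x) hε)
  have uniform_bound : ∀ ε > 0, ∀ᶠ p : C(K, E) × C(K, E) in 𝓝 (u, u), ∀ x ∈ Set.univ,
      ‖g (p.1 x) - g (p.2 x) - A x (p.1 x - p.2 x)‖ ≤ ε * ‖p.1 x - p.2 x‖ :=
    fun ε hε => isCompact_univ.eventually_forall_of_forall_eventually (local_bound ε hε)
  refine .of_isLittleO (Asymptotics.isLittleO_iff.2 fun ε hε => ?_)
  filter_upwards [uniform_bound ε hε] with ⟨v, w⟩ bound
  refine (ContinuousMap.norm_le _ (by positivity)).2 fun x => ?_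
  calc ‖(g.comp v - g.comp w - pointwiseApply A (v - w)) x‖
      = ‖g (v x) - g (w x) - A x (v x - w x)‖ := by
        simp only [ContinuousMap.sub_apply, ContinuousMap.comp_apply, pointwiseApply_apply]
    _ ≤ ε * ‖v x - w x‖ := bound x trivial
    _ ≤ ε * ‖v - w‖ := by
        gcongr
        exact (v - w).norm_coe_le_norm x

end Differentiability

section Smoothness

variable {K : Type*} [TopologicalSpace K] [CompactSpace K] {𝕜 : Type*} [RCLike 𝕜]
  {E : Type uE} [NormedAddCommGroup E] [NormedSpace 𝕜 E]

-- The universe of `F` absorbs that of `E`, so that the induction can pass from `F` to `E →L[𝕜] F`.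
theorem contDiff_nat_postcomp {F : Type max uE uF} [NormedAddCommGroup F] [NormedSpace 𝕜 F]
    {n : ℕ} {g : C(E, F)} (hg : ContDiff 𝕜 n g) :
    ContDiff 𝕜 n fun u : C(K, E) => g.comp u := by
  induction n generalizing F with
  | zero => exact contDiff_zero.2 g.continuous_postcomp
  | succ n ih =>
    rw [Nat.cast_succ] at hg ⊢
    obtain ⟨g', hg', hderiv⟩ := contDiff_succ_iff_hasFDerivAt.1 hg
    let G' : C(E, E →L[𝕜] F) := ⟨g', hg'.continuous⟩
    refine contDiff_succ_iff_hasFDerivAt.2 ⟨fun u => pointwiseApply (G'.comp u), ?_, fun u => ?_⟩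
    · exact pointwiseApply.contDiff.comp (ih (g := G') hg')
    · have hstrict (x : K) : HasStrictFDerivAt g (G'.comp u x) (u x) :=
        hg.contDiffAt.hasStrictFDerivAt' (hderiv (u x)) (by simp)
      exact (hasStrictFDerivAt_postcomp hstrict).hasFDerivAt

theorem stmt_6_general {F : Type uF} [NormedAddCommGroup F] [NormedSpace 𝕜 F]
    {n : ℕ∞} (g : C(E, F)) (hg : ContDiff 𝕜 n g) :
    ContDiff 𝕜 n fun u : C(K, E) => g.comp u := by
  refine contDiff_iff_forall_nat_le.2 fun m hm => ?_
  let lift : F ≃L[𝕜] ULift.{uE} F := ContinuousLinearEquiv.ulift.symm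
  have hlift : ContDiff 𝕜 m (lift ∘ g) := lift.contDiff.comp (hg.of_le (by exact_mod_cast hm))
  have lifted_postcomp :=
    contDiff_nat_postcomp (K := K) (g := ⟨lift ∘ g, hlift.continuous⟩) hlift
  exact (lift.symm.toContinuousLinearMap.compLeftContinuous 𝕜 K).contDiff.comp lifted_postcomp

end Smoothness

/-- For a nonempty compact space `K`, finite-dimensional real normed spaces `E`, `F`
and a `C^∞` map `g : E → F`, the composition operator
`g∗ : C(K, E) → C(K, F)`, `u ↦ g ∘ u`, is `C^∞` between the sup-norm Banach spaces. -/
theorem stmt_6 {K : Type*} [TopologicalSpace K] [CompactSpace K] [Nonempty K]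
    {E F : Type*} [NormedAddCommGroup E] [NormedSpace ℝ E] [FiniteDimensional ℝ E]
    [NormedAddCommGroup F] [NormedSpace ℝ F] [FiniteDimensional ℝ F]
    (g : E → F) (hg : ContDiff ℝ (⊤ : ℕ∞) g) :
    ContDiff ℝ (⊤ : ℕ∞)
      (fun u : C(K, E) => (⟨g, hg.continuous⟩ : C(E, F)).comp u) :=
  stmt_6_general ⟨g, hg.continuous⟩ hg
end

section
/- Let K be a nonempty compact topological space, let E and F be finite-dimensional real normed vector spaces, let g : E → F be a C^∞ map, and let g∗ : C(K, E) → C(K, F) be the composition operator g∗(u) = g ∘ u. Then for every u₀ ∈ C(K, E), the map g∗ is Fréchet differentiable at u₀, and its derivative is the continuous linear map C(K, E) → C(K, F) sending v to the continuous function x ↦ (Dg)(u₀(x))(v(x)), where (Dg)(e) denotes the Fréchet derivative of g at e ∈ E. -/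
/-!
Strict differentiability of `g` at a point `e`, with derivative `g' e`, says that
`g a - g b - g' e (a - b)` is small relative to `a - b` as `a` and `b` tend to `e`. Hence `g'` is
continuous on any set at whose points `g` is strictly differentiable, and the estimate persists
with `g' e` replaced by the derivative at a nearby point. Compactness of `K` makes it uniform along
`u₀`, and a uniform pointwise estimate is an estimate in the supremum norm.
-/

open scoped Topology

section

variable {𝕜 E F X K : Type*} [NontriviallyNormedField 𝕜]
  [NormedAddCommGroup E] [NormedSpace 𝕜 E] [NormedAddCommGroup F] [NormedSpace 𝕜 F]
  [TopologicalSpace X] [TopologicalSpace K]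

/-- The operator `v ↦ (x ↦ A x (v x))` on continuous functions induced by a continuous family `A`
of continuous linear maps. For `A = Dg ∘ u₀` it is the derivative at `u₀` of `u ↦ g ∘ u`. -/
def pointwiseCLM [LocallyCompactPair X E] (A : C(X, E →L[𝕜] F)) : C(X, E) →L[𝕜] C(X, F) where
  toFun v := ⟨fun x ↦ A x (v x), A.continuous.clm_apply v.continuous⟩
  map_add' v w := by ext x; exact map_add (A x) (v x) (w x)
  map_smul' c v := by ext x; exact map_smul (A x) c (v x)
  cont := ContinuousMap.continuous_of_continuous_uncurry _ <|
    (A.continuous.comp continuous_snd).clm_apply continuous_eval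

@[simp]
theorem pointwiseCLM_apply [LocallyCompactPair X E] (A : C(X, E →L[𝕜] F)) (v : C(X, E))
    (x : X) : pointwiseCLM A v x = A x (v x) :=
  rfl

theorem continuousOn_of_forall_hasStrictFDerivAt {g : E → F} {g' : E → E →L[𝕜] F} {s : Set E}
    (hg : ∀ e ∈ s, HasStrictFDerivAt g (g' e) e) : ContinuousOn g' s := by
  intro e he
  refine Metric.nhds_basis_closedBall.tendsto_right_iff.2 fun ε hε ↦ ?_
  have near_diagonal : ∀ᶠ p : E × E in 𝓝 (e, e),
      ‖g p.1 - g p.2 - g' e (p.1 - p.2)‖ ≤ ε * ‖p.1 - p.2‖ := (hg e he).isLittleO.bound hε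
  have near_e : ∀ᶠ b in 𝓝 e, ∀ᶠ p in 𝓝 (b, b),
      ‖g p.1 - g p.2 - g' e (p.1 - p.2)‖ ≤ ε * ‖p.1 - p.2‖ :=
    (continuous_id.prodMk continuous_id).tendsto e |>.eventually
      (eventually_eventually_nhds.2 near_diagonal)
  filter_upwards [nhdsWithin_le_nhds near_e, self_mem_nhdsWithin] with b hb hbs
  have lipschitz_at_b : ∀ᶠ a in 𝓝 b, ‖(g - g' e) a - (g - g' e) b‖ ≤ ε * ‖a - b‖ := by
    filter_upwards [(Continuous.prodMk_left b).tendsto b |>.eventually hb] with a ha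
    simpa only [Pi.sub_apply, map_sub, sub_sub_sub_comm] using ha
  exact mem_closedBall_iff_norm.2 <|
    ((hg b hbs).hasFDerivAt.sub (g' e).hasFDerivAt).le_of_lip' hε.le lipschitz_at_b

theorem eventually_norm_sub_sub_le_of_hasStrictFDerivAt {g : E → F} {A : X → E →L[𝕜] F} {x₀ : X}
    {e : E} (hg : HasStrictFDerivAt g (A x₀) e) (hA : ContinuousAt A x₀) {ε : ℝ} (hε : 0 < ε) :
    ∀ᶠ z : (E × E) × X in 𝓝 ((e, e), x₀),
      ‖g z.1.1 - g z.1.2 - A z.2 (z.1.1 - z.1.2)‖ ≤ ε * ‖z.1.1 - z.1.2‖ := by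
  have near_diagonal : ∀ᶠ p : E × E in 𝓝 (e, e),
      ‖g p.1 - g p.2 - A x₀ (p.1 - p.2)‖ ≤ ε / 2 * ‖p.1 - p.2‖ :=
    hg.isLittleO.bound (half_pos hε)
  have near_x₀ : ∀ᶠ x in 𝓝 x₀, ‖A x₀ - A x‖ ≤ ε / 2 := by
    filter_upwards [hA (Metric.closedBall_mem_nhds _ (half_pos hε))] with x hx
    exact mem_closedBall_iff_norm'.1 hx
  filter_upwards [near_diagonal.prodMk_nhds near_x₀] with ⟨⟨a, b⟩, x⟩ ⟨hab, hx⟩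
  calc ‖g a - g b - A x (a - b)‖
      = ‖(g a - g b - A x₀ (a - b)) + (A x₀ - A x) (a - b)‖ := by
        rw [sub_apply, sub_add_sub_cancel]
    _ ≤ ε / 2 * ‖a - b‖ + ε / 2 * ‖a - b‖ :=
        norm_add_le_of_le hab ((A x₀ - A x).le_of_opNorm_le hx _)
    _ = ε * ‖a - b‖ := by ring

theorem hasStrictFDerivAt_comp_left [CompactSpace K] (g : C(E, F)) {A : C(K, E →L[𝕜] F)}
    {u₀ : C(K, E)} (hg : ∀ x, HasStrictFDerivAt g (A x) (u₀ x)) :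
    HasStrictFDerivAt (fun u : C(K, E) ↦ g.comp u) (pointwiseCLM A) u₀ := by
  refine .of_isLittleO <| Asymptotics.isLittleO_iff.2 fun ε hε ↦ ?_
  have pointwise : ∀ᶠ p : C(K, E) × C(K, E) in 𝓝 (u₀, u₀), ∀ x ∈ Set.univ,
      ‖g (p.1 x) - g (p.2 x) - A x (p.1 x - p.2 x)‖ ≤ ε * ‖p.1 x - p.2 x‖ := by
    refine isCompact_univ.eventually_forall_of_forall_eventually fun x₀ _ ↦ ?_
    have evaluation : Continuous fun z : (C(K, E) × C(K, E)) × K ↦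
        ((z.1.1 z.2, z.1.2 z.2), z.2) := by fun_prop
    exact evaluation.tendsto ((u₀, u₀), x₀) |>.eventually <|
      eventually_norm_sub_sub_le_of_hasStrictFDerivAt (hg x₀) A.continuous.continuousAt hε
  filter_upwards [pointwise] with ⟨u, w⟩ huw
  refine (ContinuousMap.norm_le _ (by positivity)).2 fun x ↦ (huw x trivial).trans ?_
  gcongr
  exact (u - w).norm_coe_le_norm x

theorem stmt_7_general [CompactSpace K] (g : C(E, F)) {g' : E → E →L[𝕜] F} (u₀ : C(K, E))
    (hg : ∀ x, HasStrictFDerivAt g (g' (u₀ x)) (u₀ x)) :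
    ∃ L : C(K, E) →L[𝕜] C(K, F),
      (∀ v : C(K, E), ∀ x : K, L v x = g' (u₀ x) (v x)) ∧
      HasStrictFDerivAt (fun u : C(K, E) ↦ g.comp u) L u₀ := by
  have g'_continuousOn : ContinuousOn g' (Set.range u₀) :=
    continuousOn_of_forall_hasStrictFDerivAt (Set.forall_mem_range.2 hg)
  let A : C(K, E →L[𝕜] F) :=
    ⟨fun x ↦ g' (u₀ x), g'_continuousOn.comp_continuous u₀.continuous Set.mem_range_self⟩
  exact ⟨pointwiseCLM A, pointwiseCLM_apply A, hasStrictFDerivAt_comp_left g hg⟩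

end

/-- For a nonempty compact space `K`, finite-dimensional real normed spaces `E`, `F`,
a `C^∞` map `g : E → F` and `u₀ ∈ C(K, E)`, the composition operator
`g∗(u) = g ∘ u` is Fréchet differentiable at `u₀` with derivative the continuous
linear map `v ↦ (x ↦ (Dg)(u₀ x)(v x))`. -/
theorem stmt_7 {K : Type*} [TopologicalSpace K] [CompactSpace K] [Nonempty K]
    {E F : Type*} [NormedAddCommGroup E] [NormedSpace ℝ E] [FiniteDimensional ℝ E]
    [NormedAddCommGroup F] [NormedSpace ℝ F] [FiniteDimensional ℝ F]
    (g : E → F) (hg : ContDiff ℝ (⊤ : ℕ∞) g) (u₀ : C(K, E)) :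
    ∃ L : C(K, E) →L[ℝ] C(K, F),
      (∀ v : C(K, E), ∀ x : K, L v x = fderiv ℝ g (u₀ x) (v x)) ∧
      HasFDerivAt (fun u : C(K, E) => (⟨g, hg.continuous⟩ : C(E, F)).comp u) L u₀ := by
  obtain ⟨L, hL, hderiv⟩ := stmt_7_general (𝕜 := ℝ) ⟨g, hg.continuous⟩ u₀
    fun _ ↦ hg.hasStrictFDerivAt (by simp)
  exact ⟨L, hL, hderiv.hasFDerivAt⟩
end
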